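/- arXiv:1803.02306 — 6 statements merged into one kernel-verified Lean document; each statement's English description precedes it below -/
import Mathlib

section
/- Let C be a symmetric real 3×3 matrix and μ a skew-symmetric real 3×3 matrix, and let D be the 6×6 block matrix D = [[C, −μ], [μ, C]]. Then D is positive definite if and only if (i) C is positive definite and (ii) ⟨μa, b⟩² < ⟨Ca, a⟩·⟨Cb, b⟩ for all nonzero vectors a, b ∈ ℝ³. -/
open Matrix

/-!
At the vector `(a, b)` the Hermitian form of `[[A, Bᴴ], [B, D]]` is
`⟨Aa, a⟩ + ⟨Db, b⟩ + 2 re ⟨Ba, b⟩`. If `‖⟨Ba, b⟩‖² < ⟨Aa, a⟩ ⟨Db, b⟩`, then AM–GM makes this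
positive. Conversely, write `β = ⟨Ba, b⟩` and `δ = ⟨Db, b⟩`: at `(δ a, -β b)`, where the form is
minimal among the vectors `(δ a, t b)`, it takes the value `δ (⟨Aa, a⟩ δ - ‖β‖²)`.
-/

section

variable {R m n : Type*} [Fintype m] [Fintype n]

lemma star_dotProduct_conjTranspose_mulVec [NonUnitalSemiring R] [StarRing R]
    (B : Matrix n m R) (a : m → R) (b : n → R) :
    star a ⬝ᵥ (Bᴴ *ᵥ b) = star (star b ⬝ᵥ (B *ᵥ a)) := by
  rw [dotProduct_mulVec, ← star_mulVec, star_dotProduct]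

lemma star_smul_dotProduct_mulVec_smul [CommSemiring R] [StarRing R]
    (B : Matrix n m R) (c d : R) (a : m → R) (b : n → R) :
    star (c • b) ⬝ᵥ (B *ᵥ (d • a)) = star c * d * (star b ⬝ᵥ (B *ᵥ a)) := by
  rw [star_smul, smul_dotProduct, mulVec_smul, dotProduct_smul, smul_smul, smul_eq_mul]

end

section

open RCLike
open scoped ComplexOrder

variable {𝕜 m n : Type*} [RCLike 𝕜] [Fintype m] [Fintype n]
  {A : Matrix m m 𝕜} {B : Matrix n m 𝕜} {D : Matrix n n 𝕜}

lemma posDef_iff_re_dotProduct_mulVec_pos :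
    A.PosDef ↔ A.IsHermitian ∧ ∀ x, x ≠ 0 → 0 < re (star x ⬝ᵥ (A *ᵥ x)) := by
  refine ⟨fun hA ↦ ⟨hA.isHermitian, fun _ ↦ hA.re_dotProduct_pos⟩, fun ⟨hA, hpos⟩ ↦ ?_⟩
  exact .of_dotProduct_mulVec_pos hA fun x hx ↦
    pos_iff.mpr ⟨hpos x hx, hA.im_star_dotProduct_mulVec_self x⟩

lemma re_star_dotProduct_fromBlocks_mulVec (A : Matrix m m 𝕜) (B : Matrix n m 𝕜)
    (D : Matrix n n 𝕜) (a : m → 𝕜) (b : n → 𝕜) :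
    re (star (Sum.elim a b) ⬝ᵥ (fromBlocks A Bᴴ B D *ᵥ Sum.elim a b)) =
      re (star a ⬝ᵥ (A *ᵥ a)) + re (star b ⬝ᵥ (D *ᵥ b)) + 2 * re (star b ⬝ᵥ (B *ᵥ a)) := by
  simp only [fromBlocks_mulVec, Function.star_sumElim, sumElim_dotProduct_sumElim,
    Sum.elim_comp_inl, Sum.elim_comp_inr, dotProduct_add, star_dotProduct_conjTranspose_mulVec,
    map_add, star_def, conj_re]
  ring

lemma re_star_smul_dotProduct_mulVec_smul (A : Matrix m m 𝕜) (c : 𝕜) (x : m → 𝕜) :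
    re (star (c • x) ⬝ᵥ (A *ᵥ (c • x))) = ‖c‖ ^ 2 * re (star x ⬝ᵥ (A *ᵥ x)) := by
  rw [star_smul_dotProduct_mulVec_smul, star_def, RCLike.conj_mul, ← ofReal_pow, re_ofReal_mul]

lemma add_add_two_mul_re_pos_of_norm_sq_lt_mul {α δ : ℝ} {β : 𝕜} (hαδ : 0 ≤ α + δ)
    (h : ‖β‖ ^ 2 < α * δ) : 0 < α + δ + 2 * re β := by
  have hβ : 2 * ‖β‖ < α + δ :=
    lt_of_pow_lt_pow_left₀ 2 hαδ (by linarith [four_mul_le_sq_add α δ, mul_pow 2 ‖β‖ 2])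
  linarith [neg_le_of_abs_le (abs_re_le_norm β)]

lemma norm_sq_lt_mul_of_posDef_fromBlocks (h : (fromBlocks A Bᴴ B D).PosDef)
    {a : m → 𝕜} {b : n → 𝕜} (ha : a ≠ 0) (hb : b ≠ 0) :
    ‖star b ⬝ᵥ (B *ᵥ a)‖ ^ 2 < re (star a ⬝ᵥ (A *ᵥ a)) * re (star b ⬝ᵥ (D *ᵥ b)) := by
  have hD : D.PosDef := h.submatrix Sum.inr_injective
  have hδ := hD.re_dotProduct_pos hb
  set α := re (star a ⬝ᵥ (A *ᵥ a))
  set β := star b ⬝ᵥ (B *ᵥ a) with hβ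
  set δ := re (star b ⬝ᵥ (D *ᵥ b))
  have hne : Sum.elim ((δ : 𝕜) • a) (-β • b) ≠ 0 := fun h0 ↦
    smul_ne_zero (ofReal_ne_zero.mpr hδ.ne') ha (congrArg (· ∘ Sum.inl) h0)
  have hcross : re (star (-β • b) ⬝ᵥ (B *ᵥ ((δ : 𝕜) • a))) = -(δ * ‖β‖ ^ 2) := by
    rw [star_smul_dotProduct_mulVec_smul, ← hβ, star_neg, neg_mul, neg_mul, map_neg,
      mul_right_comm, star_def, RCLike.conj_mul, ← ofReal_pow, ← ofReal_mul, ofReal_re, mul_comm]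
  have hpos : 0 < δ * (α * δ - ‖β‖ ^ 2) := calc
    0 < _ := h.re_dotProduct_pos hne
    _ = δ ^ 2 * α + ‖β‖ ^ 2 * δ + 2 * -(δ * ‖β‖ ^ 2) := by
      rw [re_star_dotProduct_fromBlocks_mulVec, hcross, re_star_smul_dotProduct_mulVec_smul,
        re_star_smul_dotProduct_mulVec_smul, norm_neg, norm_ofReal, sq_abs]
    _ = δ * (α * δ - ‖β‖ ^ 2) := by ring
  exact sub_pos.mp (pos_of_mul_pos_right hpos hδ.le)

theorem pos_def_block_iff_general :
    (fromBlocks A Bᴴ B D).PosDef ↔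
      A.PosDef ∧ D.PosDef ∧ ∀ a b, a ≠ 0 → b ≠ 0 →
        ‖star b ⬝ᵥ (B *ᵥ a)‖ ^ 2 < re (star a ⬝ᵥ (A *ᵥ a)) * re (star b ⬝ᵥ (D *ᵥ b)) := by
  refine ⟨fun h ↦ ⟨h.submatrix Sum.inl_injective, h.submatrix Sum.inr_injective,
    fun _ _ ↦ norm_sq_lt_mul_of_posDef_fromBlocks h⟩, fun ⟨hA, hD, hB⟩ ↦ ?_⟩
  refine posDef_iff_re_dotProduct_mulVec_pos.mpr
    ⟨hA.isHermitian.fromBlocks (conjTranspose_conjTranspose B) hD.isHermitian, fun x hx ↦ ?_⟩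
  obtain ⟨a, b, rfl⟩ : ∃ a b, x = Sum.elim a b := ⟨_, _, (Sum.elim_comp_inl_inr x).symm⟩
  rw [re_star_dotProduct_fromBlocks_mulVec]
  rcases eq_or_ne a 0 with rfl | ha
  · have hb : b ≠ 0 := by rintro rfl; exact hx Sum.elim_zero_zero
    simpa using hD.re_dotProduct_pos hb
  rcases eq_or_ne b 0 with rfl | hb
  · simpa using hA.re_dotProduct_pos ha
  exact add_add_two_mul_re_pos_of_norm_sq_lt_mul
    (add_pos (hA.re_dotProduct_pos ha) (hD.re_dotProduct_pos hb)).le (hB a b ha hb)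

end

/-- Let `C` be a symmetric real 3×3 matrix and `μ` a skew-symmetric real
3×3 matrix, and let `D` be the 6×6 block matrix `D = [[C, −μ], [μ, C]]`. Then `D` is
positive definite if and only if (i) `C` is positive definite and (ii)
`⟨μa, b⟩² < ⟨Ca, a⟩ ⟨Cb, b⟩` for all nonzero `a, b ∈ ℝ³`. -/
theorem pos_def_block_iff (C μ : Matrix (Fin 3) (Fin 3) ℝ)
    (hC : C.IsSymm) (hμ : μᵀ = -μ) :
    (Matrix.fromBlocks C (-μ) μ C).PosDef ↔
      C.PosDef ∧ ∀ a b : Fin 3 → ℝ, a ≠ 0 → b ≠ 0 →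
        (μ.mulVec a ⬝ᵥ b) ^ 2 < (C.mulVec a ⬝ᵥ a) * (C.mulVec b ⬝ᵥ b) := by
  simpa [hμ, conjTranspose_eq_transpose_of_trivial, dotProduct_comm] using
    pos_def_block_iff_general (A := C) (B := μ) (D := C)
end

section
/- Let x : ℝ → ℝ be twice continuously differentiable, let y ∈ ℝ³ with t := |y|²/2 > 0, and assume x′(t)² ≠ 2t. Define φ : ℝ³ → ℝ by φ(z) := x(|z|²/2). Then φ satisfies the Monge–Ampère-type equation (ma) at the point y if and only if x″(t) = (8x(t) − 10t·x′(t) − 3x′(t)³)/(6(x′(t)²·t − 2t²)). -/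
/-- The radial derivative `∂_r f(y) := Σᵢ yᵢ ∂f/∂yᵢ(y)` of a function on `ℝ³`. -/
noncomputable def radialDeriv (f : (Fin 3 → ℝ) → ℝ) (y : Fin 3 → ℝ) : ℝ :=
  ∑ i, y i * fderiv ℝ f y (Pi.single i 1)

/-- The Hessian matrix `(∂²f/∂yᵢ∂yⱼ(y))` of a function on `ℝ³`. -/
noncomputable def hessian (f : (Fin 3 → ℝ) → ℝ) (y : Fin 3 → ℝ) :
    Matrix (Fin 3) (Fin 3) ℝ :=
  Matrix.of fun i j => fderiv ℝ (fun z => fderiv ℝ f z (Pi.single j 1)) y (Pi.single i 1)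

/-!
Along a radial function `x(|z|²/2)` the Hessian is the rank-one perturbation `x' I + x'' y yᵀ` of a
scalar matrix, with determinant `x'³ + 2 t x'² x''` at `|y|² = 2t`, while the radial derivative acts
on the profile `x` as the operator `2 t d/dt`. The Monge–Ampère-type equation at `y` therefore
is affine in `x''(t)`, with coefficient `2 t (x'² - 2 t)`, and can be solved for it.
-/

theorem det_smul_one_add_vecMulVec {n R : Type*} [Fintype n] [DecidableEq n] [CommRing R]
    (a : R) (u v : n → R) :
    (a • (1 : Matrix n n R) + Matrix.vecMulVec u v).det =
      a ^ Fintype.card n + a ^ (Fintype.card n - 1) * (u ⬝ᵥ v) := by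
  have h := Matrix.eval_charpoly (Matrix.vecMulVec (-u) v) a
  rw [Matrix.charpoly_vecMulVec] at h
  simpa [Matrix.smul_one_eq_diagonal, mul_comm] using h.symm

section HalfNormSq

open Filter Topology

variable {ι : Type*} [Fintype ι]

/-- The function `|z|²/2` on `ℝ^ι`, where `|z|` is the Euclidean norm (and not the sup norm that
Mathlib puts on `ι → ℝ`). Radial functions are written as compositions `g ∘ halfNormSq`. -/
noncomputable def halfNormSq (z : ι → ℝ) : ℝ :=
  (∑ i, z i ^ 2) / 2

theorem dotProduct_self_eq_two_mul_halfNormSq (z : ι → ℝ) : z ⬝ᵥ z = 2 * halfNormSq z := by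
  simp only [dotProduct, halfNormSq, pow_two]
  ring

theorem hasFDerivAt_halfNormSq (z : ι → ℝ) :
    HasFDerivAt halfNormSq (∑ i, z i • ContinuousLinearMap.proj (R := ℝ) (φ := fun _ ↦ ℝ) i) z := by
  have hsum := HasFDerivAt.fun_sum (u := Finset.univ) fun i _ ↦
    (hasFDerivAt_apply (𝕜 := ℝ) i z).pow 2
  refine (hsum.mul_const (2⁻¹ : ℝ)).congr_fderiv ?_
  ext v
  simp [Finset.mul_sum, mul_assoc]

theorem continuous_halfNormSq : Continuous (halfNormSq : (ι → ℝ) → ℝ) :=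
  continuous_iff_continuousAt.2 fun z ↦ (hasFDerivAt_halfNormSq z).continuousAt

theorem eventually_differentiableAt_halfNormSq {g : ℝ → ℝ} {y : ι → ℝ}
    (hg : ∀ᶠ s in 𝓝 (halfNormSq y), DifferentiableAt ℝ g s) :
    ∀ᶠ z in 𝓝 y, DifferentiableAt ℝ g (halfNormSq z) :=
  continuous_halfNormSq.continuousAt.eventually hg

theorem differentiableAt_comp_halfNormSq {g : ℝ → ℝ} {z : ι → ℝ}
    (hg : DifferentiableAt ℝ g (halfNormSq z)) : DifferentiableAt ℝ (g ∘ halfNormSq) z :=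
  hg.comp z (hasFDerivAt_halfNormSq z).differentiableAt

variable [DecidableEq ι]

theorem fderiv_comp_halfNormSq_single {g : ℝ → ℝ} {z : ι → ℝ}
    (hg : DifferentiableAt ℝ g (halfNormSq z)) (i : ι) :
    fderiv ℝ (g ∘ halfNormSq) z (Pi.single i 1) = deriv g (halfNormSq z) * z i := by
  rw [(hg.hasDerivAt.comp_hasFDerivAt z (hasFDerivAt_halfNormSq z)).fderiv]
  simp [Pi.single_apply]

theorem fderiv_fderiv_comp_halfNormSq_single {g : ℝ → ℝ} {y : ι → ℝ}
    (hg : ∀ᶠ s in 𝓝 (halfNormSq y), DifferentiableAt ℝ g s)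
    (hg' : DifferentiableAt ℝ (deriv g) (halfNormSq y)) (i j : ι) :
    fderiv ℝ (fun z ↦ fderiv ℝ (g ∘ halfNormSq) z (Pi.single j 1)) y (Pi.single i 1) =
      deriv g (halfNormSq y) * (if i = j then 1 else 0) +
        deriv (deriv g) (halfNormSq y) * (y i * y j) := by
  have hpartial : (fun z ↦ fderiv ℝ (g ∘ halfNormSq) z (Pi.single j 1)) =ᶠ[𝓝 y]
      fun z ↦ (deriv g ∘ halfNormSq) z * z j :=
    (eventually_differentiableAt_halfNormSq hg).mono fun z hz ↦ fderiv_comp_halfNormSq_single hz j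
  rw [hpartial.fderiv_eq,
    fderiv_fun_mul (differentiableAt_comp_halfNormSq hg') (differentiableAt_apply j y)]
  simp only [add_apply, smul_apply, smul_eq_mul, fderiv_comp_halfNormSq_single hg',
    (hasFDerivAt_apply (𝕜 := ℝ) j y).fderiv, ContinuousLinearMap.proj_apply, Pi.single_apply,
    Function.comp_apply, eq_comm (a := j)]
  ring

end HalfNormSq

section MongeAmpere

open Filter Topology

variable {x : ℝ → ℝ} {y : Fin 3 → ℝ}

theorem radialDeriv_congr {f g : (Fin 3 → ℝ) → ℝ} (h : f =ᶠ[𝓝 y] g) :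
    radialDeriv f y = radialDeriv g y := by
  simp only [radialDeriv, h.fderiv_eq]

theorem radialDeriv_comp_halfNormSq (hx : DifferentiableAt ℝ x (halfNormSq y)) :
    radialDeriv (x ∘ halfNormSq) y = 2 * halfNormSq y * deriv x (halfNormSq y) := by
  simp only [radialDeriv, fderiv_comp_halfNormSq_single hx]
  rw [← dotProduct_self_eq_two_mul_halfNormSq, dotProduct, Finset.sum_mul]
  exact Finset.sum_congr rfl fun i _ ↦ by ring

theorem radialDeriv_radialDeriv_comp_halfNormSq
    (hx : ∀ᶠ s in 𝓝 (halfNormSq y), DifferentiableAt ℝ x s)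
    (hx' : DifferentiableAt ℝ (deriv x) (halfNormSq y)) :
    radialDeriv (radialDeriv (x ∘ halfNormSq)) y =
      4 * halfNormSq y * deriv x (halfNormSq y) +
        4 * halfNormSq y ^ 2 * deriv (deriv x) (halfNormSq y) := by
  have hradial : radialDeriv (x ∘ halfNormSq) =ᶠ[𝓝 y] (fun s ↦ 2 * s * deriv x s) ∘ halfNormSq :=
    (eventually_differentiableAt_halfNormSq hx).mono fun z hz ↦ radialDeriv_comp_halfNormSq hz
  have hprofile := ((hasDerivAt_id' (halfNormSq y)).const_mul 2).fun_mul hx'.hasDerivAt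
  rw [radialDeriv_congr hradial, radialDeriv_comp_halfNormSq hprofile.differentiableAt,
    hprofile.deriv]
  ring

theorem hessian_comp_halfNormSq (hx : ∀ᶠ s in 𝓝 (halfNormSq y), DifferentiableAt ℝ x s)
    (hx' : DifferentiableAt ℝ (deriv x) (halfNormSq y)) :
    hessian (x ∘ halfNormSq) y =
      deriv x (halfNormSq y) • (1 : Matrix (Fin 3) (Fin 3) ℝ) +
        Matrix.vecMulVec (deriv (deriv x) (halfNormSq y) • y) y := by
  ext i j
  simp [hessian, fderiv_fderiv_comp_halfNormSq_single hx hx', Matrix.vecMulVec_apply,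
    Matrix.one_apply]

theorem det_hessian_comp_halfNormSq (hx : ∀ᶠ s in 𝓝 (halfNormSq y), DifferentiableAt ℝ x s)
    (hx' : DifferentiableAt ℝ (deriv x) (halfNormSq y)) :
    (hessian (x ∘ halfNormSq) y).det =
      deriv x (halfNormSq y) ^ 3 +
        2 * halfNormSq y * deriv x (halfNormSq y) ^ 2 * deriv (deriv x) (halfNormSq y) := by
  rw [hessian_comp_halfNormSq hx hx', det_smul_one_add_vecMulVec, smul_dotProduct,
    dotProduct_self_eq_two_mul_halfNormSq, Fintype.card_fin, smul_eq_mul]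
  ring

theorem ma_radial_iff_ode_general {t : ℝ} (ht : t = halfNormSq y)
    (hx : ∀ᶠ s in 𝓝 t, DifferentiableAt ℝ x s) (hx' : DifferentiableAt ℝ (deriv x) t)
    (htpos : 0 < t) (hne : deriv x t ^ 2 ≠ 2 * t) :
    (hessian (x ∘ halfNormSq) y).det =
        8 / 3 * (x ∘ halfNormSq) y - 11 / 3 * radialDeriv (x ∘ halfNormSq) y +
          radialDeriv (radialDeriv (x ∘ halfNormSq)) y ↔
      deriv (deriv x) t =
        (8 * x t - 10 * t * deriv x t - 3 * deriv x t ^ 3) /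
          (6 * (deriv x t ^ 2 * t - 2 * t ^ 2)) := by
  subst ht
  rw [det_hessian_comp_halfNormSq hx hx', radialDeriv_comp_halfNormSq hx.self_of_nhds,
    radialDeriv_radialDeriv_comp_halfNormSq hx hx', Function.comp_apply]
  set t := halfNormSq y
  have hcoeff : 6 * (deriv x t ^ 2 * t - 2 * t ^ 2) ≠ 0 := by
    rw [show 6 * (deriv x t ^ 2 * t - 2 * t ^ 2) = 6 * t * (deriv x t ^ 2 - 2 * t) by ring]
    exact mul_ne_zero (by positivity) (sub_ne_zero.2 hne)
  rw [eq_div_iff hcoeff]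
  constructor <;> intro h <;> linarith

end MongeAmpere

/-- Let `x : ℝ → ℝ` be C², let `y ∈ ℝ³` with `t := |y|²/2 > 0`, and
assume `x′(t)² ≠ 2t`. With `φ(z) := x(|z|²/2)`, the Monge–Ampère-type equation
`det(Hess φ) = (8/3)φ − (11/3)∂_r φ + ∂_r² φ` holds at `y` if and only if
`x″(t) = (8x(t) − 10t·x′(t) − 3x′(t)³)/(6(x′(t)²·t − 2t²))`. -/
theorem ma_radial_iff_ode (x : ℝ → ℝ) (hx : ContDiff ℝ 2 x)
    (y : Fin 3 → ℝ) (t : ℝ) (ht : t = (∑ i, (y i) ^ 2) / 2) (htpos : 0 < t)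
    (hne : (deriv x t) ^ 2 ≠ 2 * t)
    (φ : (Fin 3 → ℝ) → ℝ) (hφ : φ = fun z => x ((∑ i, (z i) ^ 2) / 2)) :
    (hessian φ y).det =
        8 / 3 * φ y - 11 / 3 * radialDeriv φ y + radialDeriv (radialDeriv φ) y ↔
      deriv (deriv x) t =
        (8 * x t - 10 * t * deriv x t - 3 * (deriv x t) ^ 3) /
          (6 * ((deriv x t) ^ 2 * t - 2 * t ^ 2)) := by
  subst hφ
  exact ma_radial_iff_ode_general ht (.of_forall (hx.differentiable two_ne_zero))
    (hx.differentiable_deriv_two t) htpos hne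
end

section
/- The function φ : ℝ³ → ℝ defined by φ(y₁,y₂,y₃) := (1/3)(y₁² + y₂² + y₃²) + (1/√3)·y₁y₂y₃ + 1/9 satisfies the Monge–Ampère-type equation det(Hess φ) = (8/3)φ − (11/3)∂_r φ + ∂_r² φ at every point of ℝ³. -/
/-!
On a homogeneous function of degree `k` the operator `8/3 - 11/3 ∂_r + ∂_r²` acts as the scalar
`(k - 1) (k - 8/3)`, by Euler's identity. Hence it sends `a |y|² + c y₀y₁y₂ + d` to
`-2/3 a |y|² + 2/3 c y₀y₁y₂ + 8/3 d`, while the Hessian determinant of that function is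
`8 a³ - 2 a c² |y|² + 2 c³ y₀y₁y₂`. The two agree as soon as `c² = 1/3` and `d = 3 a³`.
-/

open Finset

section Partial

variable {𝕜 ι : Type*} [NontriviallyNormedField 𝕜] [DecidableEq ι]

theorem fderiv_prod_apply_single [Finite ι] (s : Finset ι) (y : ι → 𝕜) (j : ι) :
    fderiv 𝕜 (fun z : ι → 𝕜 => ∏ k ∈ s, z k) y (Pi.single j 1) =
      if j ∈ s then ∏ k ∈ s.erase j, y k else 0 := by
  cases nonempty_fintype ι
  have h := HasFDerivAt.finsetProd (u := s) fun i _ => hasFDerivAt_apply (𝕜 := 𝕜) i y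
  simp [h.fderiv, Pi.single_apply]

variable [Fintype ι]

theorem fderiv_sum_sq_apply_single (y : ι → 𝕜) (j : ι) :
    fderiv 𝕜 (fun z : ι → 𝕜 => ∑ k, z k ^ 2) y (Pi.single j 1) = 2 * y j := by
  have h := HasFDerivAt.fun_sum (u := univ) fun i _ => (hasFDerivAt_apply (𝕜 := 𝕜) i y).pow 2
  simp [h.fderiv, Pi.single_apply]

/-- The function `a |y|² + c ∏ᵢ yᵢ + d` on `ℝ^ι`, where `|y|` is the Euclidean norm, written out
since `ι → ℝ` carries the sup norm. For three variables, this family contains the example and is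
stable under `∂_r`. -/
def quadraticAddProd (a c d : ℝ) (y : ι → ℝ) : ℝ :=
  a * ∑ i, y i ^ 2 + c * ∏ i, y i + d

theorem fderiv_quadraticAddProd_apply_single (a c d : ℝ) (y : ι → ℝ) (j : ι) :
    fderiv ℝ (quadraticAddProd a c d) y (Pi.single j 1) =
      2 * a * y j + c * ∏ k ∈ univ.erase j, y k := by
  unfold quadraticAddProd
  rw [fderiv_add_const, fderiv_fun_add (by fun_prop) (by fun_prop), fderiv_const_mul (by fun_prop),
    fderiv_const_mul (by fun_prop)]
  simp only [add_apply, smul_apply, smul_eq_mul, fderiv_sum_sq_apply_single,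
    fderiv_prod_apply_single, mem_univ, if_true]
  ring

theorem fderiv_fderiv_quadraticAddProd_apply_single (a c d : ℝ) (y : ι → ℝ) (i j : ι) :
    fderiv ℝ (fun z => fderiv ℝ (quadraticAddProd a c d) z (Pi.single j 1)) y (Pi.single i 1) =
      if i = j then 2 * a else c * ∏ k ∈ (univ.erase j).erase i, y k := by
  simp only [fderiv_quadraticAddProd_apply_single]
  rw [fderiv_fun_add (by fun_prop) (by fun_prop), fderiv_const_mul (by fun_prop),
    fderiv_const_mul (by fun_prop)]
  by_cases hij : i = j <;> simp [fderiv_prod_apply_single, fderiv_apply, hij]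

end Partial

theorem quadraticAddProd_fin_three (a c d : ℝ) :
    quadraticAddProd a c d = fun y : Fin 3 → ℝ =>
      a * (y 0 ^ 2 + y 1 ^ 2 + y 2 ^ 2) + c * (y 0 * y 1 * y 2) + d := by
  ext y
  rw [quadraticAddProd, Fin.sum_univ_three, Fin.prod_univ_three]

theorem radialDeriv_quadraticAddProd (a c d : ℝ) :
    radialDeriv (quadraticAddProd a c d) = quadraticAddProd (2 * a) (3 * c) 0 := by
  ext y
  have euler_prod : ∑ i, y i * ∏ k ∈ univ.erase i, y k = 3 * ∏ i, y i := by
    simp [mul_prod_erase]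
  calc
    radialDeriv (quadraticAddProd a c d) y
      = ∑ i, (2 * a * y i ^ 2 + c * (y i * ∏ k ∈ univ.erase i, y k)) := by
        refine sum_congr rfl fun i _ => ?_
        rw [fderiv_quadraticAddProd_apply_single]
        ring
    _ = 2 * a * ∑ i, y i ^ 2 + c * (3 * ∏ i, y i) := by
        rw [sum_add_distrib, ← mul_sum, ← mul_sum, euler_prod]
    _ = quadraticAddProd (2 * a) (3 * c) 0 y := by
        rw [quadraticAddProd]
        ring

theorem hessian_quadraticAddProd (a c d : ℝ) (y : Fin 3 → ℝ) :
    hessian (quadraticAddProd a c d) y =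
      !![2 * a, c * y 2, c * y 1;
         c * y 2, 2 * a, c * y 0;
         c * y 1, c * y 0, 2 * a] := by
  ext i j
  rw [hessian, Matrix.of_apply, fderiv_fderiv_quadraticAddProd_apply_single]
  fin_cases i <;> fin_cases j <;> simp [← filter_ne', prod_filter, Fin.prod_univ_three]

theorem det_hessian_quadraticAddProd (a c d : ℝ) (y : Fin 3 → ℝ) :
    (hessian (quadraticAddProd a c d) y).det =
      quadraticAddProd (-(2 * a * c ^ 2)) (2 * c ^ 3) (8 * a ^ 3) y := by
  rw [hessian_quadraticAddProd, Matrix.det_fin_three, quadraticAddProd_fin_three]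
  simp only [Matrix.of_apply, Matrix.cons_val]
  ring

theorem homogeneous_example_satisfies_ma_general {a c d : ℝ} (hc : c ^ 2 = 1 / 3)
    (hd : d = 3 * a ^ 3) (y : Fin 3 → ℝ) :
    (hessian (quadraticAddProd a c d) y).det =
      8 / 3 * quadraticAddProd a c d y - 11 / 3 * radialDeriv (quadraticAddProd a c d) y +
        radialDeriv (radialDeriv (quadraticAddProd a c d)) y := by
  simp only [det_hessian_quadraticAddProd, radialDeriv_quadraticAddProd, quadraticAddProd]
  subst hd
  linear_combination (2 * c * ∏ i, y i - 2 * a * ∑ i, y i ^ 2) * hc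

/-- The function
`φ(y₁,y₂,y₃) = (1/3)(y₁²+y₂²+y₃²) + (1/√3) y₁y₂y₃ + 1/9` satisfies the
Monge–Ampère-type equation `det(Hess φ) = (8/3)φ − (11/3)∂_r φ + ∂_r² φ` on all of `ℝ³`. -/
theorem homogeneous_example_satisfies_ma
    (φ : (Fin 3 → ℝ) → ℝ)
    (hφ : φ = fun y => 1 / 3 * ((y 0) ^ 2 + (y 1) ^ 2 + (y 2) ^ 2) +
      1 / Real.sqrt 3 * (y 0 * y 1 * y 2) + 1 / 9) :
    ∀ y : Fin 3 → ℝ,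
      (hessian φ y).det =
        8 / 3 * φ y - 11 / 3 * radialDeriv φ y + radialDeriv (radialDeriv φ) y := by
  rw [hφ, ← quadraticAddProd_fin_three]
  exact homogeneous_example_satisfies_ma_general (by norm_num [div_pow]) (by norm_num)
end

section
/- Let φ : ℝ³ → ℝ be defined by φ(y₁,y₂,y₃) := (1/3)(y₁² + y₂² + y₃²) + (1/√3)·y₁y₂y₃ + 1/9, let C(y) := Hess φ(y) be its Hessian matrix, and define ε² := (8/3)(φ − ∂_r φ). Then the compatibility relation det C(y) = ε²(y) + yᵀ C(y) y holds for every y ∈ ℝ³. -/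
open Matrix

/-!
The quadric `|y|²` and the cubic `y₁y₂y₃` are homogeneous of degrees `2` and `3`, so for
`φ = a |y|² + s y₁y₂y₃ + c` Euler's identity gives
`φ - ∂_r φ = c - a |y|² - 2 s y₁y₂y₃` and `yᵀ (Hess φ) y = 2 a |y|² + 6 s y₁y₂y₃`,
while expanding the determinant gives
`det (Hess φ) = 8 a³ - 2 a s² |y|² + 2 s³ y₁y₂y₃`.
The coefficients of `1`, `|y|²` and `y₁y₂y₃` on the two sides of the compatibility relation agree
as soon as `c = 3 a³` and `s² = 1/3`, which hold for `a = 1/3`, `s = 1/√3`, `c = 1/9`.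
-/

/-- The polynomial `a |y|² + s y₁y₂y₃ + c`, the family of potentials to which the `φ` of the
homogeneous nearly Kähler structure on `S³ × S³` belongs. -/
def cubicPotential (a s c : ℝ) (y : Fin 3 → ℝ) : ℝ :=
  a * (y 0 ^ 2 + y 1 ^ 2 + y 2 ^ 2) + s * (y 0 * y 1 * y 2) + c

namespace cubicPotential

variable (a s c : ℝ) (y : Fin 3 → ℝ)

-- Indices in `Fin 3` are cyclic, so `i + 1` and `i + 2` are the two indices other than `i`.
theorem fderiv_apply_single (i : Fin 3) :
    fderiv ℝ (cubicPotential a s c) y (Pi.single i 1) =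
      2 * a * y i + s * (y (i + 1) * y (i + 2)) := by
  have coord (j : Fin 3) := hasFDerivAt_apply (𝕜 := ℝ) j y
  have hderiv : HasFDerivAt (cubicPotential a s c) _ y :=
    (((((coord 0).pow 2).add ((coord 1).pow 2)).add ((coord 2).pow 2)).const_mul a).add
      ((((coord 0).mul (coord 1)).mul (coord 2)).const_mul s) |>.add_const c
  rw [hderiv.fderiv]
  fin_cases i <;> simp <;> ring

theorem radialDeriv_eq :
    radialDeriv (cubicPotential a s c) y =
      2 * a * (y 0 ^ 2 + y 1 ^ 2 + y 2 ^ 2) + 3 * s * (y 0 * y 1 * y 2) := by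
  simp only [radialDeriv, fderiv_apply_single, Fin.sum_univ_three, Fin.reduceAdd]
  ring

theorem hessian_eq :
    hessian (cubicPotential a s c) y =
      !![2 * a, s * y 2, s * y 1;
         s * y 2, 2 * a, s * y 0;
         s * y 1, s * y 0, 2 * a] := by
  ext i j
  have coord (k : Fin 3) := hasFDerivAt_apply (𝕜 := ℝ) k y
  have hderiv : HasFDerivAt (fun z ↦ 2 * a * z j + s * (z (j + 1) * z (j + 2))) _ y :=
    ((coord j).const_mul (2 * a)).add (((coord (j + 1)).mul (coord (j + 2))).const_mul s)
  simp only [hessian, fderiv_apply_single, of_apply, hderiv.fderiv]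
  fin_cases i <;> fin_cases j <;> simp

theorem det_hessian :
    (hessian (cubicPotential a s c) y).det =
      8 * a ^ 3 - 2 * a * s ^ 2 * (y 0 ^ 2 + y 1 ^ 2 + y 2 ^ 2) +
        2 * s ^ 3 * (y 0 * y 1 * y 2) := by
  simp only [hessian_eq, det_fin_three, of_apply, cons_val', cons_val_zero, cons_val_one, cons_val,
    cons_val_fin_one]
  ring

theorem hessian_mulVec_dotProduct_self :
    hessian (cubicPotential a s c) y *ᵥ y ⬝ᵥ y =
      2 * a * (y 0 ^ 2 + y 1 ^ 2 + y 2 ^ 2) + 6 * s * (y 0 * y 1 * y 2) := by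
  simp only [hessian_eq, mulVec, dotProduct, Fin.sum_univ_three, of_apply, cons_val', cons_val_zero,
    cons_val_one, cons_val, cons_val_fin_one]
  ring

end cubicPotential

theorem compatibility_relation_general {a s c : ℝ} (hc : c = 3 * a ^ 3) (hs : s ^ 2 = 1 / 3)
    (y : Fin 3 → ℝ) :
    (hessian (cubicPotential a s c) y).det =
      8 / 3 * (cubicPotential a s c y - radialDeriv (cubicPotential a s c) y) +
        hessian (cubicPotential a s c) y *ᵥ y ⬝ᵥ y := by
  rw [cubicPotential.det_hessian, cubicPotential.radialDeriv_eq,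
    cubicPotential.hessian_mulVec_dotProduct_self, cubicPotential]
  linear_combination (2 * s * (y 0 * y 1 * y 2) - 2 * a * (y 0 ^ 2 + y 1 ^ 2 + y 2 ^ 2)) * hs -
    8 / 3 * hc

/-- For `φ(y) = (1/3)(y₁²+y₂²+y₃²) + (1/√3) y₁y₂y₃ + 1/9`,
`C(y) := Hess φ(y)` and `ε² := (8/3)(φ − ∂_r φ)`, the compatibility relation
`det C(y) = ε²(y) + yᵀ C(y) y` holds for every `y ∈ ℝ³`. -/
theorem compatibility_relation
    (φ : (Fin 3 → ℝ) → ℝ)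
    (hφ : φ = fun y => 1 / 3 * ((y 0) ^ 2 + (y 1) ^ 2 + (y 2) ^ 2) +
      1 / Real.sqrt 3 * (y 0 * y 1 * y 2) + 1 / 9)
    (C : (Fin 3 → ℝ) → Matrix (Fin 3) (Fin 3) ℝ) (hC : C = fun y => hessian φ y)
    (εsq : (Fin 3 → ℝ) → ℝ)
    (hε : εsq = fun y => 8 / 3 * (φ y - radialDeriv φ y)) :
    ∀ y : Fin 3 → ℝ, (C y).det = εsq y + (C y).mulVec y ⬝ᵥ y := by
  subst hφ hC hε
  exact compatibility_relation_general (by norm_num) (by simp)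
end

section
/- Let k ≠ 0 and l ∈ ℝ, and define x : (0,∞) → ℝ by x(t) := k·t^l. Then x satisfies the identity 6(x′(t)²·t − 2t²)·x″(t) = 8x(t) − 10t·x′(t) − 3x′(t)³ for all t > 0 if and only if either l = 1/2 (with k arbitrary nonzero), or l = 3/2 and k = 2√2/9, or l = 3/2 and k = −2√2/9. -/
/-!
On a power `k * t ^ l` every term of the equation is a multiple of `t ^ l` or of `t ^ (3 * l - 3)`,
and both resulting coefficients are divisible by `2 * l - 1`. Away from `l = 1 / 2` the equation
therefore says that two monomials, of degrees `2 * l` and `3`, agree on the positive half-line;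
as they do not both vanish, their degrees and coefficients must coincide.
-/

/-- The left side minus the right side of the radial equation
`6 (x'² t - 2 t²) x'' = 8 x - 10 t x' - 3 x'³` at the point `t`, so that the solutions `x` are the
functions at which it vanishes. -/
noncomputable def radialResidual (x : ℝ → ℝ) (t : ℝ) : ℝ :=
  6 * ((deriv x t) ^ 2 * t - 2 * t ^ 2) * deriv (deriv x) t -
    (8 * x t - 10 * t * deriv x t - 3 * (deriv x t) ^ 3)

/-- For `l < 1` the equality at `t = 0` reads `0 = 0`, by the junk values of `deriv` and `rpow`. -/
theorem deriv_const_mul_rpow (k l : ℝ) :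
    deriv (fun t : ℝ => k * t ^ l) = fun t => k * l * t ^ (l - 1) := by
  ext t
  rw [deriv_const_mul_field, Real.deriv_rpow_const, mul_assoc]

theorem radialResidual_const_mul_rpow (k l : ℝ) {t : ℝ} (ht : 0 < t) :
    radialResidual (fun s => k * s ^ l) t =
      k * t ^ (l - 3) *
        ((2 * l - 1) * (3 * k ^ 2 * l ^ 3 * t ^ (2 * l) - 2 * (3 * l - 4) * t ^ (3 : ℝ))) := by
  have h_sub_one : t ^ (l - 1) = t ^ l / t := Real.rpow_sub_one ht.ne' l
  have h_sub_two : t ^ (l - 1 - 1) = t ^ l / t / t := by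
    rw [Real.rpow_sub_one ht.ne', h_sub_one]
  have h_sub_three : t ^ (l - 3) = t ^ l / t ^ 3 := mod_cast Real.rpow_sub_natCast ht.ne' l 3
  have h_double : t ^ (2 * l) = (t ^ l) ^ 2 := by
    rw [mul_comm]
    exact mod_cast Real.rpow_mul_natCast ht.le l 2
  have h_three : t ^ (3 : ℝ) = t ^ 3 := mod_cast Real.rpow_natCast t 3
  simp only [radialResidual, deriv_const_mul_rpow]
  rw [h_sub_one, h_sub_two, h_sub_three, h_double, h_three]
  field_simp
  ring

theorem radialResidual_const_mul_rpow_eq_zero_iff {k t : ℝ} (l : ℝ) (hk : k ≠ 0) (ht : 0 < t) :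
    radialResidual (fun s => k * s ^ l) t = 0 ↔
      l = 1 / 2 ∨ 3 * k ^ 2 * l ^ 3 * t ^ (2 * l) = 2 * (3 * l - 4) * t ^ (3 : ℝ) := by
  have h_prefactor : k * t ^ (l - 3) ≠ 0 := mul_ne_zero hk (Real.rpow_pos_of_pos ht _).ne'
  have h_half : 2 * l - 1 = 0 ↔ l = 1 / 2 := by
    rw [sub_eq_zero, eq_div_iff two_ne_zero, mul_comm]
  rw [radialResidual_const_mul_rpow k l ht, mul_eq_zero_iff_left h_prefactor, mul_eq_zero, h_half,
    sub_eq_zero]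

theorem const_mul_rpow_eq_const_mul_rpow_iff {a b p q : ℝ} :
    (∀ t : ℝ, 0 < t → a * t ^ p = b * t ^ q) ↔ a = b ∧ (a = 0 ∨ p = q) := by
  constructor
  · intro h
    have hab : a = b := by simpa using h 1 one_pos
    subst hab
    have h_two : (2 : ℝ) ^ p = 2 ^ q ∨ a = 0 := mul_eq_mul_left_iff.mp (h 2 two_pos)
    rw [Real.rpow_right_inj two_pos (by norm_num)] at h_two
    exact ⟨rfl, h_two.symm⟩
  · rintro ⟨rfl, rfl | rfl⟩ t - <;> simp

theorem coefficients_and_degrees_eq_iff {k l : ℝ} (hk : k ≠ 0) :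
    3 * k ^ 2 * l ^ 3 = 2 * (3 * l - 4) ∧ (3 * k ^ 2 * l ^ 3 = 0 ∨ 2 * l = 3) ↔
      l = 3 / 2 ∧ k ^ 2 = 8 / 81 := by
  constructor
  · rintro ⟨h_coeff, h_zero | h_deg⟩
    · have hl : l = 0 := by simpa [hk] using h_zero
      norm_num [hl] at h_coeff
    · obtain rfl : l = 3 / 2 := by linarith
      exact ⟨rfl, by linarith⟩
  · rintro ⟨rfl, h_sq⟩
    exact ⟨by linarith, Or.inr (by norm_num)⟩

theorem sq_eq_eight_div_eighty_one_iff {k : ℝ} :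
    k ^ 2 = 8 / 81 ↔ k = 2 * Real.sqrt 2 / 9 ∨ k = -(2 * Real.sqrt 2 / 9) := by
  have h_sq : (2 * Real.sqrt 2 / 9) ^ 2 = 8 / 81 := by
    rw [div_pow, mul_pow, Real.sq_sqrt zero_le_two]
    norm_num
  rw [← h_sq, sq_eq_sq_iff_eq_or_eq_neg]

/-- Let `k ≠ 0`, `l ∈ ℝ` and `x(t) := k·t^l` on `(0,∞)`. Then `x`
satisfies `6(x′(t)²·t − 2t²)·x″(t) = 8x(t) − 10t·x′(t) − 3x′(t)³` for all `t > 0` if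
and only if `l = 1/2` (with `k` arbitrary nonzero), or `l = 3/2` and `k = 2√2/9`, or
`l = 3/2` and `k = −2√2/9`. -/
theorem power_solutions_of_radial_ode (k l : ℝ) (hk : k ≠ 0)
    (x : ℝ → ℝ) (hx : x = fun t => k * t ^ l) :
    (∀ t : ℝ, 0 < t →
        6 * ((deriv x t) ^ 2 * t - 2 * t ^ 2) * deriv (deriv x) t =
          8 * x t - 10 * t * deriv x t - 3 * (deriv x t) ^ 3) ↔
      l = 1 / 2 ∨ (l = 3 / 2 ∧ k = 2 * Real.sqrt 2 / 9) ∨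
        (l = 3 / 2 ∧ k = -(2 * Real.sqrt 2 / 9)) := by
  subst hx
  calc
    _ ↔ ∀ t : ℝ, 0 < t →
          l = 1 / 2 ∨ 3 * k ^ 2 * l ^ 3 * t ^ (2 * l) = 2 * (3 * l - 4) * t ^ (3 : ℝ) :=
      forall₂_congr fun _ ht =>
        sub_eq_zero.symm.trans (radialResidual_const_mul_rpow_eq_zero_iff l hk ht)
    _ ↔ l = 1 / 2 ∨ ∀ t : ℝ, 0 < t →
          3 * k ^ 2 * l ^ 3 * t ^ (2 * l) = 2 * (3 * l - 4) * t ^ (3 : ℝ) := by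
      simp only [forall_or_left]
    _ ↔ l = 1 / 2 ∨ l = 3 / 2 ∧ k ^ 2 = 8 / 81 := by
      rw [const_mul_rpow_eq_const_mul_rpow_iff, coefficients_and_degrees_eq_iff hk]
    _ ↔ _ := by rw [sq_eq_eight_div_eighty_one_iff, and_or_left]
end

section
/- Let U ⊆ ℝ³ be open and let φ : U → ℝ be three times continuously differentiable, satisfying on all of U both the Monge–Ampère-type equation det(Hess φ) = (8/3)φ − (11/3)∂_r φ + ∂_r² φ and the positivity condition φ − ∂_r φ > 0. Set ε := ((8/3)(φ − ∂_r φ))^{1/2} and let A(y) denote the adjugate (transpose cofactor) matrix of Hess φ(y). Then for each fixed i ∈ {1,2,3}, the vector field W on U with components Wⱼ(y) := (A_{ij}(y) − yᵢ yⱼ)/ε(y)³, j = 1,2,3, is divergence-free: Σ_{j=1}^3 ∂Wⱼ/∂yⱼ = 0 on U. -/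
open Matrix

/-!
By Piola's identity the rows of `A = adj(Hess φ)` are divergence-free, while
`Σⱼ ∂ⱼ(yᵢ yⱼ) = (n + 1) yᵢ` in dimension `n`. The function `s = φ - ∂_r φ` has gradient
`-(Hess φ) y`, and `A (Hess φ) = det(Hess φ) • 1`. Hence the divergence of
`g(s) (A_{ij} - yᵢ yⱼ)` is `-yᵢ` times `(n + 1) g(s) + g'(s) (det(Hess φ) - ⟨y, (Hess φ) y⟩)`,
where `⟨y, (Hess φ) y⟩ = ∂_r² φ - ∂_r φ`.
When `g` is a power, the vanishing of this scalar is the Monge–Ampère-type equation.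
-/

section Determinant

variable {ι : Type*} [DecidableEq ι]
  {𝕜 E : Type*} [NontriviallyNormedField 𝕜] [NormedAddCommGroup E] [NormedSpace 𝕜 E]
  {M : E → Matrix ι ι 𝕜} {y : E}

theorem differentiableAt_row_updateRow (hM : ∀ l, DifferentiableAt 𝕜 (fun z => (M z).row l) y)
    (j : ι) (u : ι → 𝕜) (l : ι) : DifferentiableAt 𝕜 (fun z => ((M z).updateRow j u).row l) y := by
  rcases eq_or_ne l j with rfl | hlj
  · simp only [row_def, updateRow_self, differentiableAt_const]
  · simpa only [row_def, updateRow_ne hlj] using hM l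

variable [Fintype ι]

theorem det_updateRow_updateRow_swap {R : Type*} [CommRing R] (A : Matrix ι ι R) {j l : ι}
    (hjl : j ≠ l) (u v : ι → R) :
    ((A.updateRow j u).updateRow l v).det = -((A.updateRow j v).updateRow l u).det := calc
    ((A.updateRow j u).updateRow l v).det =
        (((A.updateRow j v).updateRow l u).submatrix (Equiv.swap j l) id).det := by
      congr 1
      ext a b
      simp only [updateRow_apply, submatrix_apply, Equiv.swap_apply_def, id_eq]
      split_ifs <;> simp_all
    _ = -((A.updateRow j v).updateRow l u).det := by
      simp [det_permute, Equiv.Perm.sign_swap hjl]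

theorem adjugate_row_dotProduct_mulVec {R : Type*} [CommRing R] (H : Matrix ι ι R) (v : ι → R)
    (i : ι) : H.adjugate.row i ⬝ᵥ (H *ᵥ v) = H.det * v i := calc
  H.adjugate.row i ⬝ᵥ (H *ᵥ v) = (H.adjugate *ᵥ (H *ᵥ v)) i := rfl
  _ = H.det * v i := by
    rw [mulVec_mulVec, adjugate_mul, smul_mulVec, one_mulVec, Pi.smul_apply, smul_eq_mul]

/-- The determinant as a continuous multilinear function of the rows, the form to which the
calculus of multilinear maps applies. -/
def detRowContinuousMultilinear (𝕜 ι : Type*) [Fintype ι] [DecidableEq ι]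
    [NontriviallyNormedField 𝕜] : ContinuousMultilinearMap 𝕜 (fun _ : ι => ι → 𝕜) 𝕜 where
  toMultilinearMap := (detRowAlternating : (ι → 𝕜) [⋀^ι]→ₗ[𝕜] 𝕜).toMultilinearMap
  cont := continuous_id.matrix_det

theorem hasFDerivAt_det {M' : ι → E →L[𝕜] ι → 𝕜}
    (hM : ∀ l, HasFDerivAt (fun z => (M z).row l) (M' l) y) :
    HasFDerivAt (fun z => (M z).det)
      (∑ l, (detRowContinuousMultilinear 𝕜 ι).toContinuousLinearMap (M y) l ∘L M' l) y :=
  HasFDerivAt.multilinear_comp (f := detRowContinuousMultilinear 𝕜 ι) hM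

theorem differentiableAt_det (hM : ∀ l, DifferentiableAt 𝕜 (fun z => (M z).row l) y) :
    DifferentiableAt 𝕜 (fun z => (M z).det) y :=
  (hasFDerivAt_det fun l => (hM l).hasFDerivAt).differentiableAt

theorem fderiv_det_apply (hM : ∀ l, DifferentiableAt 𝕜 (fun z => (M z).row l) y) (v : E) :
    fderiv 𝕜 (fun z => (M z).det) y v =
      ∑ l, ((M y).updateRow l (fderiv 𝕜 (fun z => (M z).row l) y v)).det := by
  rw [(hasFDerivAt_det fun l => (hM l).hasFDerivAt).fderiv, _root_.sum_apply]
  rfl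

theorem differentiableAt_adjugate_row (hM : ∀ l, DifferentiableAt 𝕜 (fun z => (M z).row l) y)
    (i : ι) : DifferentiableAt 𝕜 (fun z => (M z).adjugate.row i) y := by
  refine differentiableAt_pi.2 fun j => ?_
  simp only [row_apply, adjugate_apply]
  exact differentiableAt_det (differentiableAt_row_updateRow hM j _)

theorem fderiv_adjugate_apply (hM : ∀ l, DifferentiableAt 𝕜 (fun z => (M z).row l) y) (i j : ι)
    (v : E) :
    fderiv 𝕜 (fun z => (M z).adjugate i j) y v =
      ∑ l, if j = l then 0 else
        (((M y).updateRow j (Pi.single i 1)).updateRow l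
          (fderiv 𝕜 (fun z => (M z).row l) y v)).det := by
  simp only [adjugate_apply]
  rw [fderiv_det_apply (differentiableAt_row_updateRow hM j _)]
  refine Finset.sum_congr rfl fun l _ => ?_
  split_ifs with hjl
  · subst hjl
    refine det_eq_zero_of_row_eq_zero j fun k => ?_
    simp only [row_def, updateRow_self, fderiv_fun_const, Pi.zero_apply, _root_.zero_apply]
  · simp only [row_def, updateRow_ne (Ne.symm hjl)]

end Determinant

section Divergence

variable {ι : Type*} [Fintype ι] [DecidableEq ι] {y : ι → ℝ}

/-- The divergence `∑ⱼ ∂Wⱼ/∂yⱼ` of a vector field on `ℝ^ι`. It is a sum of componentwise `fderiv`s,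
so it is meaningful only where every component is differentiable. -/
noncomputable def divergence (W : (ι → ℝ) → ι → ℝ) (y : ι → ℝ) : ℝ :=
  ∑ j, fderiv ℝ (fun z => W z j) y (Pi.single j 1)

theorem divergence_sub {V W : (ι → ℝ) → ι → ℝ} (hV : DifferentiableAt ℝ V y)
    (hW : DifferentiableAt ℝ W y) :
    divergence (fun z => V z - W z) y = divergence V y - divergence W y := by
  rw [differentiableAt_pi] at hV hW
  simp only [divergence, Pi.sub_apply, fderiv_fun_sub (hV _) (hW _), _root_.sub_apply,
    Finset.sum_sub_distrib]

theorem divergence_smul {g : (ι → ℝ) → ℝ} {W : (ι → ℝ) → ι → ℝ} (hg : DifferentiableAt ℝ g y)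
    (hW : DifferentiableAt ℝ W y) :
    divergence (fun z => g z • W z) y = g y * divergence W y + fderiv ℝ g y (W y) := by
  have hgW : fderiv ℝ g y (W y) = ∑ j, W y j * fderiv ℝ g y (Pi.single j 1) := by
    conv_lhs => rw [pi_eq_sum_univ' (W y)]
    simp only [map_sum, map_smul, smul_eq_mul]
  rw [differentiableAt_pi] at hW
  simp only [divergence, Pi.smul_apply, smul_eq_mul, fderiv_fun_mul hg (hW _),
    _root_.add_apply, _root_.smul_apply, Finset.sum_add_distrib, ← Finset.mul_sum, hgW]

theorem divergence_id (y : ι → ℝ) : divergence (fun z => z) y = Fintype.card ι := by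
  simp [divergence, fderiv_apply]

theorem divergence_apply_smul_self (i : ι) (y : ι → ℝ) :
    divergence (fun z : ι → ℝ => z i • z) y = (Fintype.card ι + 1) * y i := by
  rw [divergence_smul (differentiableAt_apply i y) differentiableAt_fun_id, divergence_id,
    (hasFDerivAt_apply i y).fderiv, ContinuousLinearMap.proj_apply]
  ring

theorem divergence_adjugate_row_eq_zero {M : (ι → ℝ) → Matrix ι ι ℝ}
    (hM : ∀ l, DifferentiableAt ℝ (fun z => (M z).row l) y)
    (hclosed : ∀ j l, fderiv ℝ (fun z => (M z).row l) y (Pi.single j 1) =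
      fderiv ℝ (fun z => (M z).row j) y (Pi.single l 1)) (i : ι) :
    divergence (fun z => (M z).adjugate.row i) y = 0 := by
  let rowTerm (j l : ι) : ℝ := if j = l then 0 else
    (((M y).updateRow j (Pi.single i 1)).updateRow l
      (fderiv ℝ (fun z => (M z).row l) y (Pi.single j 1))).det
  have hdiv : divergence (fun z => (M z).adjugate.row i) y = ∑ j, ∑ l, rowTerm j l :=
    Finset.sum_congr rfl fun j _ => fderiv_adjugate_apply hM i j _
  -- As `∂ⱼ M_l = ∂_l Mⱼ`, exchanging `j` and `l` only exchanges two rows of the determinant.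
  have rowTerm_swap (j l : ι) : rowTerm l j = -rowTerm j l := by
    rcases eq_or_ne j l with rfl | hjl
    · simp only [rowTerm, if_true, neg_zero]
    · simp only [rowTerm, if_neg hjl, if_neg hjl.symm, hclosed l j]
      rw [updateRow_comm _ hjl.symm, det_updateRow_updateRow_swap _ hjl]
  have hneg : ∑ j, ∑ l, rowTerm j l = -∑ j, ∑ l, rowTerm j l := calc
    ∑ j, ∑ l, rowTerm j l = ∑ j, ∑ l, rowTerm l j := Finset.sum_comm
    _ = ∑ j, ∑ l, -rowTerm j l :=
      Finset.sum_congr rfl fun j _ => Finset.sum_congr rfl fun l _ => rowTerm_swap j l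
    _ = -∑ j, ∑ l, rowTerm j l := by simp only [Finset.sum_neg_distrib]
  rw [hdiv]
  exact self_eq_neg.mp hneg

end Divergence

section Euler

variable {E : Type*} [NormedAddCommGroup E] [NormedSpace ℝ E] {f : E → ℝ} {y : E}

/-- The radial derivative `∂_r f (y) = Df(y) y` on an arbitrary normed space, written without
coordinates; `radialDeriv_eq_eulerDeriv` identifies it with `∑ᵢ yᵢ ∂f/∂yᵢ` on `ℝ³`. -/
noncomputable def eulerDeriv (f : E → ℝ) (y : E) : ℝ :=
  fderiv ℝ f y y

theorem contDiffAt_fderiv_apply (hf : ContDiffAt ℝ 3 f y) (v : E) :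
    ContDiffAt ℝ 2 (fun z => fderiv ℝ f z v) y :=
  (hf.fderiv_right (m := 2) (by norm_num)).clm_apply contDiffAt_const

theorem differentiableAt_fderiv (hf : ContDiffAt ℝ 2 f y) : DifferentiableAt ℝ (fderiv ℝ f) y :=
  (hf.fderiv_right (m := 1) (by norm_num)).differentiableAt one_ne_zero

theorem fderiv_fderiv_apply (hf : ContDiffAt ℝ 2 f y) (v w : E) :
    fderiv ℝ (fun z => fderiv ℝ f z v) y w = fderiv ℝ (fderiv ℝ f) y w v := by
  simp [fderiv_clm_apply (differentiableAt_fderiv hf) (differentiableAt_const v)]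

theorem fderiv_fderiv_apply_comm (hf : ContDiffAt ℝ 2 f y) (v w : E) :
    fderiv ℝ (fun z => fderiv ℝ f z v) y w = fderiv ℝ (fun z => fderiv ℝ f z w) y v := by
  rw [fderiv_fderiv_apply hf, fderiv_fderiv_apply hf]
  exact hf.isSymmSndFDerivAt (by simp) w v

theorem differentiableAt_eulerDeriv (hf : ContDiffAt ℝ 2 f y) :
    DifferentiableAt ℝ (eulerDeriv f) y :=
  (differentiableAt_fderiv hf).clm_apply differentiableAt_fun_id

theorem fderiv_eulerDeriv_apply (hf : ContDiffAt ℝ 2 f y) (v : E) :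
    fderiv ℝ (eulerDeriv f) y v = fderiv ℝ f y v + fderiv ℝ (fderiv ℝ f) y v y := by
  unfold eulerDeriv
  simp [fderiv_clm_apply (differentiableAt_fderiv hf) differentiableAt_fun_id]

theorem differentiableAt_sub_eulerDeriv (hf : ContDiffAt ℝ 2 f y) :
    DifferentiableAt ℝ (fun z => f z - eulerDeriv f z) y :=
  (hf.differentiableAt two_ne_zero).fun_sub (differentiableAt_eulerDeriv hf)

end Euler

section Hessian

variable {ι : Type*} [Fintype ι] [DecidableEq ι] {φ : (ι → ℝ) → ℝ} {y : ι → ℝ}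

/-- The Hessian matrix `(∂²φ/∂yᵢ∂yⱼ)` in arbitrary finite dimension, with the same order of
differentiation as in `hessian`, so that the two agree definitionally on `ℝ³`. -/
noncomputable def hessianMatrix (φ : (ι → ℝ) → ℝ) (y : ι → ℝ) : Matrix ι ι ℝ :=
  Matrix.of fun i j => fderiv ℝ (fun z => fderiv ℝ φ z (Pi.single j 1)) y (Pi.single i 1)

theorem dotProduct_hessianMatrix_mulVec (hφ : ContDiffAt ℝ 2 φ y) (v w : ι → ℝ) :
    v ⬝ᵥ (hessianMatrix φ y *ᵥ w) = fderiv ℝ (fderiv ℝ φ) y v w := by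
  conv_rhs => rw [pi_eq_sum_univ' v, pi_eq_sum_univ' w]
  simp only [dotProduct, mulVec, hessianMatrix, of_apply, fderiv_fderiv_apply hφ, map_sum,
    map_smul, smul_eq_mul, _root_.sum_apply, _root_.smul_apply, Finset.mul_sum]
  rw [Finset.sum_comm]
  refine Finset.sum_congr rfl fun j _ => Finset.sum_congr rfl fun i _ => ?_
  ring

theorem eulerDeriv_eulerDeriv (hφ : ContDiffAt ℝ 2 φ y) :
    eulerDeriv (eulerDeriv φ) y = eulerDeriv φ y + y ⬝ᵥ (hessianMatrix φ y *ᵥ y) := by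
  rw [dotProduct_hessianMatrix_mulVec hφ]
  exact fderiv_eulerDeriv_apply hφ y

theorem fderiv_sub_eulerDeriv_apply (hφ : ContDiffAt ℝ 2 φ y) (v : ι → ℝ) :
    fderiv ℝ (fun z => φ z - eulerDeriv φ z) y v = -(v ⬝ᵥ (hessianMatrix φ y *ᵥ y)) := by
  rw [fderiv_fun_sub (hφ.differentiableAt two_ne_zero) (differentiableAt_eulerDeriv hφ),
    _root_.sub_apply, fderiv_eulerDeriv_apply hφ, dotProduct_hessianMatrix_mulVec hφ]
  ring

theorem differentiableAt_hessianMatrix_row (hφ : ContDiffAt ℝ 3 φ y) (l : ι) :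
    DifferentiableAt ℝ (fun z => (hessianMatrix φ z).row l) y :=
  differentiableAt_pi.2 fun m =>
    (differentiableAt_fderiv (contDiffAt_fderiv_apply hφ (Pi.single m 1))).clm_apply
      (differentiableAt_const (Pi.single l 1))

theorem fderiv_hessianMatrix_row_comm (hφ : ContDiffAt ℝ 3 φ y) (j l : ι) :
    fderiv ℝ (fun z => (hessianMatrix φ z).row l) y (Pi.single j 1) =
      fderiv ℝ (fun z => (hessianMatrix φ z).row j) y (Pi.single l 1) := by
  ext m
  have hcomponent (l : ι) (v : ι → ℝ) : fderiv ℝ (fun z => (hessianMatrix φ z).row l) y v m =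
      fderiv ℝ (fun z => fderiv ℝ (fun w => fderiv ℝ φ w (Pi.single m 1)) z (Pi.single l 1)) y v :=
    (DFunLike.congr_fun (fderiv_apply (differentiableAt_hessianMatrix_row hφ l) m) v).symm
  rw [hcomponent, hcomponent]
  exact fderiv_fderiv_apply_comm (contDiffAt_fderiv_apply hφ (Pi.single m 1)) _ _

theorem divergence_adjugate_hessianMatrix_row (hφ : ContDiffAt ℝ 3 φ y) (i : ι) :
    divergence (fun z => (hessianMatrix φ z).adjugate.row i) y = 0 :=
  divergence_adjugate_row_eq_zero (differentiableAt_hessianMatrix_row hφ)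
    (fderiv_hessianMatrix_row_comm hφ) i

theorem differentiableAt_adjugate_hessianMatrix_row (hφ : ContDiffAt ℝ 3 φ y) (i : ι) :
    DifferentiableAt ℝ (fun z => (hessianMatrix φ z).adjugate.row i) y :=
  differentiableAt_adjugate_row (differentiableAt_hessianMatrix_row hφ) i

theorem divergence_smul_adjugate_hessianMatrix_row_sub (hφ : ContDiffAt ℝ 3 φ y) {g : ℝ → ℝ}
    {g' : ℝ} (hg : HasDerivAt g g' (φ y - eulerDeriv φ y)) (i : ι) :
    divergence (fun z => g (φ z - eulerDeriv φ z) •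
        ((hessianMatrix φ z).adjugate.row i - z i • z)) y =
      -y i * ((Fintype.card ι + 1) * g (φ y - eulerDeriv φ y) +
        g' * ((hessianMatrix φ y).det + eulerDeriv φ y - eulerDeriv (eulerDeriv φ) y)) := by
  have hφ₂ : ContDiffAt ℝ 2 φ y := hφ.of_le (by norm_num)
  have hA := differentiableAt_adjugate_hessianMatrix_row hφ i
  have hyy : DifferentiableAt ℝ (fun z : ι → ℝ => z i • z) y :=
    (differentiableAt_apply i y).fun_smul differentiableAt_fun_id
  have hweight : HasFDerivAt (fun z => g (φ z - eulerDeriv φ z))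
      (g' • fderiv ℝ (fun z => φ z - eulerDeriv φ z) y) y :=
    hg.comp_hasFDerivAt y (differentiableAt_sub_eulerDeriv hφ₂).hasFDerivAt
  have hW : divergence (fun z => (hessianMatrix φ z).adjugate.row i - z i • z) y =
      -((Fintype.card ι + 1) * y i) := by
    rw [divergence_sub hA hyy, divergence_adjugate_hessianMatrix_row hφ,
      divergence_apply_smul_self, zero_sub]
  have hgrad : fderiv ℝ (fun z => g (φ z - eulerDeriv φ z)) y
      ((hessianMatrix φ y).adjugate.row i - y i • y) =
      -(g' * (y i * ((hessianMatrix φ y).det + eulerDeriv φ y - eulerDeriv (eulerDeriv φ) y))) := by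
    rw [hweight.fderiv, _root_.smul_apply, fderiv_sub_eulerDeriv_apply hφ₂, sub_dotProduct,
      adjugate_row_dotProduct_mulVec, smul_dotProduct, eulerDeriv_eulerDeriv hφ₂]
    simp only [smul_eq_mul]
    ring
  rw [divergence_smul hweight.differentiableAt (hA.fun_sub hyy), hW, hgrad]
  ring

end Hessian

theorem hasDerivAt_inv_sqrt_mul_pow {c t : ℝ} (hct : 0 < c * t) (k : ℕ) :
    HasDerivAt (fun x => (√(c * x) ^ k)⁻¹) (-(k / (2 * t)) * (√(c * t) ^ k)⁻¹) t := by
  have ht : t ≠ 0 := right_ne_zero_of_mul hct.ne'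
  have hq : √(c * t) ≠ 0 := (Real.sqrt_pos.2 hct).ne'
  have hsq : √(c * t) ^ 2 = c * t := Real.sq_sqrt hct.le
  have hsqrt : HasDerivAt (fun x => √(c * x)) (√(c * t) / (2 * t)) t := by
    convert! ((hasDerivAt_id' t).const_mul c).sqrt hct.ne' using 1
    field_simp
    linear_combination hsq
  have hpow : HasDerivAt (fun x => √(c * x) ^ k) (k / (2 * t) * √(c * t) ^ k) t := by
    convert! hsqrt.pow k using 1
    cases k with
    | zero => simp
    | succ k =>
      rw [Nat.add_sub_cancel, pow_succ]
      ring
  convert! hpow.fun_inv (pow_ne_zero k hq) using 1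
  field_simp

theorem divergence_free_tau_general {ι : Type*} [Fintype ι] [DecidableEq ι] {φ : (ι → ℝ) → ℝ}
    {y : ι → ℝ} {c : ℝ} {k : ℕ} (hφ : ContDiffAt ℝ 3 φ y)
    (hpos : 0 < c * (φ y - eulerDeriv φ y))
    (hma : k * ((hessianMatrix φ y).det + eulerDeriv φ y - eulerDeriv (eulerDeriv φ) y) =
      2 * (Fintype.card ι + 1) * (φ y - eulerDeriv φ y))
    (i : ι) :
    ∑ j, fderiv ℝ
      (fun z => ((hessianMatrix φ z).adjugate i j - z i * z j) /
        √(c * (φ z - eulerDeriv φ z)) ^ k) y (Pi.single j 1) = 0 := by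
  have hs : φ y - eulerDeriv φ y ≠ 0 := right_ne_zero_of_mul hpos.ne'
  simp only [div_eq_inv_mul]
  refine (divergence_smul_adjugate_hessianMatrix_row_sub hφ
    (hasDerivAt_inv_sqrt_mul_pow hpos k) i).trans ?_
  set s := φ y - eulerDeriv φ y
  set w := (√(c * s) ^ k)⁻¹
  field_simp
  linear_combination y i * w * hma

theorem radialDeriv_eq_eulerDeriv : radialDeriv = eulerDeriv := by
  funext f y
  have hy : fderiv ℝ f y y = fderiv ℝ f y (∑ i, y i • Pi.single i 1) :=
    congrArg (fderiv ℝ f y) (pi_eq_sum_univ' y)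
  simp only [radialDeriv, eulerDeriv, hy, map_sum, map_smul, smul_eq_mul]

theorem hessian_eq_hessianMatrix : hessian = hessianMatrix := rfl

/-- Let `U ⊆ ℝ³` be open and `φ : U → ℝ` be C³, satisfying on `U` the
Monge–Ampère-type equation `det(Hess φ) = (8/3)φ − (11/3)∂_r φ + ∂_r² φ` and the
positivity `φ − ∂_r φ > 0`. With `ε := ((8/3)(φ − ∂_r φ))^{1/2}` and
`A(y) := adj(Hess φ(y))`, for each fixed `i` the vector field
`Wⱼ(y) := (A_{ij}(y) − yᵢyⱼ)/ε(y)³` is divergence-free on `U`. -/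
theorem divergence_free_tau (U : Set (Fin 3 → ℝ)) (hU : IsOpen U)
    (φ : (Fin 3 → ℝ) → ℝ) (hφ : ContDiffOn ℝ 3 φ U)
    (hma : ∀ y ∈ U, (hessian φ y).det =
      8 / 3 * φ y - 11 / 3 * radialDeriv φ y + radialDeriv (radialDeriv φ) y)
    (hpos : ∀ y ∈ U, 0 < φ y - radialDeriv φ y)
    (i : Fin 3) :
    ∀ y ∈ U,
      ∑ j, fderiv ℝ
        (fun z => ((hessian φ z).adjugate i j - z i * z j) /
          (Real.sqrt (8 / 3 * (φ z - radialDeriv φ z))) ^ 3)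
        y (Pi.single j 1) = 0 := by
  simp only [radialDeriv_eq_eulerDeriv, hessian_eq_hessianMatrix] at hma hpos ⊢
  exact fun y hy => divergence_free_tau_general (hφ.contDiffAt (hU.mem_nhds hy))
    (mul_pos (by norm_num) (hpos y hy)) (by
      rw [Fintype.card_fin]
      push_cast
      linear_combination 3 * hma y hy) i
end
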